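/- Let n be even and f(x,y) = Σ_{i=0}^{n-1} a_i x^i y^{n-1-i} with a_{n-1-i} = −a_i for all i (so f is skew-symmetric: f(y,x) = −f(x,y)). Then the Pfaffian of the n×n skew-symmetric matrix with entries f(x_i, x_j) for i < j equals (Π_{i=0}^{n/2−1} a_i) · Π_{1 ≤ i < j ≤ n} (x_j − x_i). -/

import Mathlib

/-!
Let `n = 2m`. By skew-symmetry of the coefficients, `f(x, y) = h(x, y) - h(y, x)` with
`h(x, y) = ∑_{k < m} a_k x^k y^(n-1-k)` (`sum_eq_antisymm_lowerHalf`). The canonical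
representatives of perfect matchings form a transversal for the hyperoctahedral subgroup of `S_n`
(`rep_bijective`), and the sign of an element of this subgroup is determined by its flips inside
the blocks. Hence `m! · Pf(f)` is the sum over all `τ ∈ S_n` of `sgn τ` times the product of the
values of `h` on the blocks of `τ` (`factorial_mul_pf`).

Expanding that product means choosing a monomial `w i < m` of `h` for each block `i`. For fixed
`w` the sum over `τ` is the determinant of the matrix of powers of the `x_p` with exponents
`w i, n-1-w i` (`alternating_sum`). It has two equal columns unless `w` is a bijection, in which
case it is the Vandermonde determinant, because `0, n-1, 1, n-2, …` is an even permutation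
(`sign_zigzag`). So `m! · Pf(f) = m! · ∏ a_i · ∏ (x_j - x_i)`. The factor `m!` is cancelled in the
universal ring `ℤ[x, a]`, from which the identity specializes to every commutative ring (`pf_eq`).
-/

open Finset Equiv MvPolynomial

open scoped Classical

noncomputable section

/-- The position of the `j`-th element of the `i`-th block. -/
def bpos (m k : ℕ) (i : Fin m) (j : Fin k) : Fin (m * k) :=
  ⟨k * (i : ℕ) + (j : ℕ), by
    have hi := i.isLt
    have hj := j.isLt
    calc k * (i : ℕ) + (j : ℕ) < k * (i : ℕ) + k := by omega
      _ = k * ((i : ℕ) + 1) := by ring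
      _ ≤ k * m := Nat.mul_le_mul_left k hi
      _ = m * k := Nat.mul_comm k m⟩

/-- Each block of the (oriented) partition is listed in increasing order. -/
def IsBlockMono (m k : ℕ) (π : Equiv.Perm (Fin (m * k))) : Prop :=
  ∀ i : Fin m, StrictMono fun j : Fin k => π (bpos m k i j)

/-- The blocks are listed in increasing order of their first elements. -/
def IsLeadMono (m k : ℕ) (π : Equiv.Perm (Fin (m * k))) : Prop :=
  ∀ (i i' : Fin m) (j : Fin k), i < i' →
    π (bpos m k i ⟨0, j.pos⟩) < π (bpos m k i' ⟨0, j.pos⟩)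

/-- Canonical representative of a set partition of `[n]`, `n = m*k`, into `m` blocks of
size `k`: each block increasing and blocks ordered by their minima. -/
def IsPartRep (m k : ℕ) (π : Equiv.Perm (Fin (m * k))) : Prop :=
  IsBlockMono m k π ∧ IsLeadMono m k π

/-- A `k`-ary function is skew-symmetric. -/
def IsSkewFun {k : ℕ} {α R : Type*} [CommRing R] (f : (Fin k → α) → R) : Prop :=
  ∀ (σ : Equiv.Perm (Fin k)) (v : Fin k → α),
    f (v ∘ σ) = (Equiv.Perm.sign σ : ℤ) • f v

/-- The hyperpfaffian of a skew-symmetric `k`-ary function on `[m*k]`: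
the signed sum over all set partitions of `[m*k]` into `m` blocks of size `k`. -/
def hyperPf (m k : ℕ) {R : Type*} [CommRing R]
    (f : (Fin k → Fin (m * k)) → R) : R :=
  ∑ π ∈ Finset.univ.filter (IsPartRep m k),
    (Equiv.Perm.sign π : ℤ) • ∏ i : Fin m, f fun j => π (bpos m k i j)

/-- A polynomial in `k` variables is skew-symmetric. -/
def IsSkewPoly {k : ℕ} {R : Type*} [CommRing R] (f : MvPolynomial (Fin k) R) : Prop :=
  ∀ σ : Equiv.Perm (Fin k),
    MvPolynomial.rename (⇑σ) f = (Equiv.Perm.sign σ : ℤ) • f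

/-- The hyperpfaffian `Pf (f(x_S))` of the values of a polynomial `f` in `k` variables
at the variables indexed by the `k`-subsets `S` of `[m*k]`. -/
def hyperPfPoly (m k : ℕ) {R : Type*} [CommRing R]
    (f : MvPolynomial (Fin k) R) : MvPolynomial (Fin (m * k)) R :=
  ∑ π ∈ Finset.univ.filter (IsPartRep m k),
    (Equiv.Perm.sign π : ℤ) •
      ∏ i : Fin m, MvPolynomial.rename (fun j => π (bpos m k i j)) f

/-- The Vandermonde product. -/
def vand (n : ℕ) (R : Type*) [CommRing R] : MvPolynomial (Fin n) R :=
  ∏ p ∈ Finset.univ.filter (fun p : Fin n × Fin n => p.1 < p.2),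
    (MvPolynomial.X p.2 - MvPolynomial.X p.1)

/-- The coefficient of `f` at the monomial with exponent vector `r`. -/
def coeffOf {k : ℕ} {R : Type*} [CommRing R] (f : MvPolynomial (Fin k) R)
    (r : Fin k → ℕ) : R :=
  MvPolynomial.coeff (Finsupp.equivFunOnFinite.symm r) f

/-- Membership in `Γ_{n,k}`: a strictly increasing composition of `k/2*(n-1)`
into `k` distinct nonnegative parts. -/
def InGamma (n k : ℕ) (r : Fin k → ℕ) : Prop :=
  StrictMono r ∧ ∑ j, r j = k / 2 * (n - 1)

/-- Canonical representative of an element `β` of `R_{n,k}`, encoded as a permutation `e` of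
`Fin (m*k)` (identified with `{0,…,n-1}`): the blocks of `e` are the compositions of `β`,
each block is increasing and sums to `k/2*(n-1)`, and the blocks are ordered canonically. -/
def IsWeightRep (m k : ℕ) (e : Equiv.Perm (Fin (m * k))) : Prop :=
  IsPartRep m k e ∧
    ∀ i : Fin m, ∑ j : Fin k, ((e (bpos m k i j)) : ℕ) = k / 2 * (m * k - 1)

/-- The weight of the element `x` of `[m*k]` in the weighted oriented partition with
oriented partition (representative) `π` and weight vectors `w`. -/
def wtOf (m k : ℕ) (π : Equiv.Perm (Fin (m * k))) (w : Fin m → Fin k → ℕ) :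
    Fin (m * k) → ℕ := fun x =>
  w ⟨((π.symm x : Fin (m*k)) : ℕ) / k, Nat.div_lt_of_lt_mul (lt_of_lt_of_le (π.symm x).isLt (le_of_eq (Nat.mul_comm m k)))⟩
    ⟨((π.symm x : Fin (m*k)) : ℕ) % k, Nat.mod_lt _ (by
      have ht := (π.symm x).isLt
      have hk : k ≠ 0 := by rintro rfl; omega
      omega)⟩

end

/-! ### Matchings and the hyperoctahedral group -/

/-- The permutation of `Fin (m * 2)` that sends the `j`-th element of block `i` to the
`ε (ρ i) j`-th element of block `ρ i`: the general element of the hyperoctahedral group. -/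
def blk (m : ℕ) (ε : Fin m → Perm (Fin 2)) (ρ : Perm (Fin m)) : Perm (Fin (m * 2)) :=
  finProdFinEquiv.permCongr (prodCongrRight ε * prodCongrLeft fun _ => ρ)

theorem bpos_eq (m : ℕ) (i : Fin m) (j : Fin 2) : bpos m 2 i j = finProdFinEquiv (i, j) := by
  ext
  simp [bpos, add_comm]

theorem bpos_inj {m : ℕ} {i i' : Fin m} {j j' : Fin 2} :
    bpos m 2 i j = bpos m 2 i' j' ↔ i = i' ∧ j = j' := by
  simp [bpos_eq]

theorem blk_bpos (m : ℕ) (ε : Fin m → Perm (Fin 2)) (ρ : Perm (Fin m)) (i : Fin m) (j : Fin 2) :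
    blk m ε ρ (bpos m 2 i j) = bpos m 2 (ρ i) (ε (ρ i) j) := by
  simp [bpos_eq, blk, permCongr_apply]

theorem perm_ext_bpos {m : ℕ} {σ τ : Perm (Fin (m * 2))}
    (h : ∀ i j, σ (bpos m 2 i j) = τ (bpos m 2 i j)) : σ = τ := by
  ext x
  obtain ⟨⟨i, j⟩, rfl⟩ := finProdFinEquiv.surjective x
  rw [← bpos_eq, h]

/-- Permuting whole blocks of even size is an even permutation. -/
theorem sign_blk (m : ℕ) (ε : Fin m → Perm (Fin 2)) (ρ : Perm (Fin m)) :
    Perm.sign (blk m ε ρ) = ∏ i, Perm.sign (ε i) := by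
  rw [blk, Perm.sign_permCongr, Perm.sign_mul, Perm.sign_prodCongrRight, Perm.sign_prodCongrLeft]
  simp

theorem prod_bpos {m : ℕ} {M : Type*} [CommMonoid M] (f : Fin (m * 2) → M) :
    ∏ x, f x = ∏ i, ∏ j, f (bpos m 2 i j) := by
  simp_rw [bpos_eq]
  rw [← Fintype.prod_prod_type' (f := fun i j => f (finProdFinEquiv (i, j)))]
  exact (Fintype.prod_equiv finProdFinEquiv _ _ fun _ => rfl).symm

/-- The canonical representatives of the perfect matchings form a transversal of the left
cosets of the hyperoctahedral group in the symmetric group. -/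
theorem rep_bijective (m : ℕ) : Function.Bijective
    (fun p : {π // IsPartRep m 2 π} × (Fin m → Perm (Fin 2)) × Perm (Fin m) =>
      p.1.1 * blk m p.2.1 p.2.2) := by
  constructor
  · rintro ⟨⟨π₁, hb₁, hl₁⟩, ε₁, ρ₁⟩ ⟨⟨π₂, hb₂, hl₂⟩, ε₂, ρ₂⟩ h
    have key : ∀ i j, π₁ (bpos m 2 (ρ₁ i) (ε₁ (ρ₁ i) j)) = π₂ (bpos m 2 (ρ₂ i) (ε₂ (ρ₂ i) j)) := by
      intro i j
      have := congrArg (fun σ : Perm (Fin (m * 2)) => σ (bpos m 2 i j)) h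
      simpa [Perm.mul_apply, blk_bpos] using this
    -- As sets, corresponding blocks agree; both are listed increasingly.
    have hblock : ∀ i, (fun j => π₁ (bpos m 2 (ρ₁ i) j)) = fun j => π₂ (bpos m 2 (ρ₂ i) j) := by
      intro i
      rw [← StrictMono.range_inj (hb₁ _) (hb₂ _)]
      have e₁ := (ε₁ (ρ₁ i)).surjective.range_comp (fun j => π₁ (bpos m 2 (ρ₁ i) j))
      have e₂ := (ε₂ (ρ₂ i)).surjective.range_comp (fun j => π₂ (bpos m 2 (ρ₂ i) j))
      rw [← e₁, ← e₂]
      exact congrArg Set.range (funext fun j => key i j)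
    have hm₁ : StrictMono fun i => π₁ (bpos m 2 i 0) := fun i i' hi => hl₁ i i' 0 hi
    have hm₂ : StrictMono fun i => π₂ (bpos m 2 i 0) := fun i i' hi => hl₂ i i' 0 hi
    -- The sets of block minima agree as well, and both are listed increasingly.
    have hlead : (fun i => π₁ (bpos m 2 i 0)) = fun i => π₂ (bpos m 2 i 0) := by
      rw [← StrictMono.range_inj hm₁ hm₂]
      have e₁ := ρ₁.surjective.range_comp (fun i => π₁ (bpos m 2 i 0))
      have e₂ := ρ₂.surjective.range_comp (fun i => π₂ (bpos m 2 i 0))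
      rw [← e₁, ← e₂]
      exact congrArg Set.range (funext fun i => congrFun (hblock i) 0)
    have hρ : ρ₁ = ρ₂ := by
      ext1 i
      apply hm₁.injective
      have h1 := congrFun (hblock i) 0
      have h2 := congrFun hlead (ρ₂ i)
      exact h1.trans h2.symm
    subst hρ
    have hπ : π₁ = π₂ := by
      refine perm_ext_bpos fun i j => ?_
      have := congrFun (hblock (ρ₁⁻¹ i)) j
      simpa using this
    subst hπ
    have hε : ε₁ = ε₂ := by
      funext i
      ext1 j
      have := key (ρ₁⁻¹ i) j
      simpa [bpos_inj] using this
    subst hε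
    rfl
  · intro τ
    let s : Fin m → Perm (Fin 2) := fun i => Tuple.sort fun j => τ (bpos m 2 i j)
    let L : Fin m → Fin (m * 2) := fun i => τ (bpos m 2 i (s i 0))
    let ρ : Perm (Fin m) := (Tuple.sort L)⁻¹
    let ε : Fin m → Perm (Fin 2) := fun i => (s (ρ⁻¹ i))⁻¹
    have hπ : ∀ i j, (τ * (blk m ε ρ)⁻¹) (bpos m 2 i j)
        = τ (bpos m 2 (ρ⁻¹ i) (s (ρ⁻¹ i) j)) := by
      intro i j
      rw [Perm.mul_apply]
      congr 1
      rw [Perm.inv_eq_iff_eq, blk_bpos]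
      simp [ε]
    refine ⟨⟨⟨τ * (blk m ε ρ)⁻¹, ?_, ?_⟩, ε, ρ⟩, by simp⟩
    · intro i
      simp only [hπ]
      refine Monotone.strictMono_of_injective
        (Tuple.monotone_sort fun j => τ (bpos m 2 (ρ⁻¹ i) j)) ?_
      intro j j' h
      simpa [bpos_inj] using h
    · intro i i' j hi
      have hmono : StrictMono (L ∘ Tuple.sort L) := by
        refine (Tuple.monotone_sort L).strictMono_of_injective ?_
        refine Function.Injective.comp ?_ (Equiv.injective _)
        intro i i' h
        have := τ.injective h
        exact (bpos_inj.1 this).1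
      have := hmono hi
      rw [hπ, hπ]
      simpa [L, ρ] using this

/-- Summing over all permutations counts every matching `m!` times, once for each ordering of
its blocks; the two orderings inside a block antisymmetrize `h`. -/
theorem factorial_mul_pf (m : ℕ) {S : Type*} [CommRing S] (h : (Fin 2 → Fin (m * 2)) → S) :
    (m.factorial : S) * ∑ π ∈ Finset.univ.filter (IsPartRep m 2),
        (Perm.sign π : ℤ) • ∏ i, ∑ e : Perm (Fin 2),
          (Perm.sign e : ℤ) • h (fun j => π (bpos m 2 i (e j)))
      = ∑ τ : Perm (Fin (m * 2)), (Perm.sign τ : ℤ) • ∏ i, h fun j => τ (bpos m 2 i j) := by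
  rw [← (rep_bijective m).sum_comp
    (fun τ => (Perm.sign τ : ℤ) • ∏ i, h fun j => τ (bpos m 2 i j)), Fintype.sum_prod_type]
  have hsub : ∀ F : Perm (Fin (m * 2)) → S,
      ∑ π ∈ Finset.univ.filter (IsPartRep m 2), F π = ∑ π : {π // IsPartRep m 2 π}, F π.1 := by
    intro F
    exact Finset.sum_subtype _ (by simp) F
  rw [hsub, Finset.mul_sum]
  refine Finset.sum_congr rfl fun π _ => ?_
  rw [Fintype.sum_prod_type, Finset.prod_univ_sum, Fintype.piFinset_univ, Finset.smul_sum,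
    Finset.mul_sum]
  refine Finset.sum_congr rfl fun ε _ => ?_
  have hterm : ∀ ρ : Perm (Fin m),
      (Perm.sign (π.1 * blk m ε ρ) : ℤ) • ∏ i, h (fun j => (π.1 * blk m ε ρ) (bpos m 2 i j))
        = (Perm.sign π.1 : ℤ) • ∏ i, (Perm.sign (ε i) : ℤ) •
            h (fun j => π.1 (bpos m 2 i (ε i j))) := by
    intro ρ
    have h1 : ∏ i, h (fun j => (π.1 * blk m ε ρ) (bpos m 2 i j))
        = ∏ i, h (fun j => π.1 (bpos m 2 i (ε i j))) := by
      simp only [Perm.mul_apply, blk_bpos]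
      exact Equiv.prod_comp ρ fun i => h (fun j => π.1 (bpos m 2 i (ε i j)))
    rw [h1, Perm.sign_mul, sign_blk]
    simp only [zsmul_eq_mul, Finset.prod_mul_distrib]
    push_cast
    ring
  simp only [hterm, Finset.sum_const, Finset.card_univ, Fintype.card_perm, Fintype.card_fin,
    nsmul_eq_mul]

/-! ### Generalized Vandermonde determinants -/

/-- The exponent of the variable at position `j` of block `i` once block `i` is given the
monomial `x ^ w i * y ^ (2 * m - 1 - w i)`. -/
def expo (m : ℕ) (w : Fin m → Fin m) (i : Fin m) (j : Fin 2) : Fin (m * 2) :=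
  if j = 0 then ⟨w i, by omega⟩ else ⟨2 * m - 1 - w i, by omega⟩

theorem expo_injective {m : ℕ} {i i' : Fin m} {j j' : Fin 2}
    (h : expo m id i j = expo m id i' j') : i = i' ∧ j = j' := by
  fin_cases j <;> fin_cases j' <;> simp [expo, Fin.ext_iff] at h ⊢ <;> omega

/-- The permutation `0, n-1, 1, n-2, 2, …` of `{0, …, n-1}`, where `n = 2 * m`. -/
noncomputable def zigzag (m : ℕ) : Perm (Fin (m * 2)) :=
  Equiv.ofBijective (fun x => expo m id (finProdFinEquiv.symm x).1 (finProdFinEquiv.symm x).2)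
    (Finite.injective_iff_bijective.1 fun x y h => by
      obtain ⟨h1, h2⟩ := expo_injective h
      exact finProdFinEquiv.symm.injective (Prod.ext h1 h2))

theorem zigzag_bpos (m : ℕ) (i : Fin m) (j : Fin 2) :
    zigzag m (bpos m 2 i j) = expo m id i j := by
  rw [bpos_eq, zigzag, ofBijective_apply, symm_apply_apply]

/-- Every entry before block `i` lies on the same side of both entries of block `i`, so the
inversions come in pairs. -/
theorem sign_zigzag (m : ℕ) : Perm.sign (zigzag m) = 1 := by
  rw [Perm.sign_eq_prod_prod_Iio, prod_bpos]
  refine Finset.prod_eq_one fun i _ => ?_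
  have hIio : Finset.Iio (bpos m 2 i 1) = insert (bpos m 2 i 0) (Finset.Iio (bpos m 2 i 0)) := by
    ext x
    simp only [bpos, Finset.mem_Iio, Finset.mem_insert, Fin.lt_def, Fin.ext_iff, Fin.val_zero,
      Fin.val_one]
    omega
  rw [Fin.prod_univ_two, hIio, Finset.prod_insert (by simp), if_pos, one_mul]
  · have : ∀ x ∈ Finset.Iio (bpos m 2 i 0),
        (if zigzag m x < zigzag m (bpos m 2 i 1) then (1 : ℤˣ) else -1)
          = if zigzag m x < zigzag m (bpos m 2 i 0) then 1 else -1 := by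
      intro x hx
      obtain ⟨⟨i', j⟩, rfl⟩ := finProdFinEquiv.surjective x
      rw [← bpos_eq] at hx ⊢
      simp only [zigzag_bpos]
      congr 1
      simp only [Finset.mem_Iio, bpos, Fin.lt_def] at hx
      fin_cases j <;> simp [expo] at hx ⊢ <;> omega
    rw [Finset.prod_congr rfl this, Int.units_mul_self]
  · simp [zigzag_bpos, expo]
    omega

/-- The alternating sum attached to a choice of one monomial per block is a generalized
Vandermonde determinant: it vanishes if some monomial is used twice, and is the Vandermonde
product otherwise. -/
theorem alternating_sum (m : ℕ) {S : Type*} [CommRing S] (x : Fin (m * 2) → S)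
    (w : Fin m → Fin m) :
    ∑ τ : Perm (Fin (m * 2)), (Perm.sign τ : ℤ) •
        ∏ i, ∏ j, x (τ (bpos m 2 i j)) ^ (expo m w i j : ℕ)
      = if Function.Bijective w then (Matrix.vandermonde x).det else 0 := by
  let c : Fin (m * 2) → Fin (m * 2) := fun q =>
    expo m w (finProdFinEquiv.symm q).1 (finProdFinEquiv.symm q).2
  have hc : ∀ i j, c (bpos m 2 i j) = expo m w i j := by
    intro i j
    simp only [c, bpos_eq, symm_apply_apply]
  have hdet : ∑ τ : Perm (Fin (m * 2)), (Perm.sign τ : ℤ) •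
        ∏ i, ∏ j, x (τ (bpos m 2 i j)) ^ (expo m w i j : ℕ)
      = ((Matrix.vandermonde x).submatrix id c).det := by
    rw [Matrix.det_apply]
    refine Finset.sum_congr rfl fun τ _ => ?_
    rw [prod_bpos]
    simp [hc, Matrix.vandermonde_apply, Units.smul_def]
  rw [hdet]
  split_ifs with hw
  · let ρ : Perm (Fin m) := Equiv.ofBijective w hw
    have : c = ⇑(zigzag m * blk m (fun _ => 1) ρ) := by
      funext q
      obtain ⟨⟨i, j⟩, rfl⟩ := finProdFinEquiv.surjective q
      rw [← bpos_eq, hc, Perm.mul_apply, blk_bpos, zigzag_bpos]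
      rfl
    rw [this, Matrix.det_permute', Perm.sign_mul, sign_zigzag, sign_blk]
    simp
  · have hinj : ¬ Function.Injective w := fun h => hw (Finite.injective_iff_bijective.1 h)
    simp only [Function.Injective, not_forall] at hinj
    obtain ⟨i, i', hii, hne⟩ := hinj
    refine Matrix.det_zero_of_column_eq (i := bpos m 2 i 0) (j := bpos m 2 i' 0) ?_ ?_
    · simpa [bpos_inj] using hne
    · intro k
      simp [hc, expo, hii]

/-! ### The Pfaffian in an arbitrary commutative ring -/

/-- The value at `(y 0, y 1)` of the part of the skew polynomial with coefficients `a` whose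
exponent in the first variable is less than `m`; the polynomial is its antisymmetrization. -/
def lowerHalf (m : ℕ) {S : Type*} [CommRing S] (a : ℕ → S) (y : Fin 2 → S) : S :=
  ∑ k : Fin m, a k * (y 0 ^ (k : ℕ) * y 1 ^ (2 * m - 1 - k))

/-- The claimed identity multiplied by `m!`: among the choices `w` of one monomial per block,
exactly the `m!` bijective ones contribute, and they all contribute the same. -/
theorem factorial_mul_main (m : ℕ) {S : Type*} [CommRing S] (x : Fin (m * 2) → S) (a : ℕ → S) :
    (m.factorial : S) * ∑ π ∈ Finset.univ.filter (IsPartRep m 2),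
        (Perm.sign π : ℤ) • ∏ i, ∑ e : Perm (Fin 2),
          (Perm.sign e : ℤ) • lowerHalf m a (fun j => x (π (bpos m 2 i (e j))))
      = m.factorial * ((∏ i : Fin m, a i) * (Matrix.vandermonde x).det) := by
  rw [factorial_mul_pf m fun v => lowerHalf m a fun j => x (v j)]
  have hexp : ∀ τ : Perm (Fin (m * 2)),
      (Perm.sign τ : ℤ) • ∏ i, lowerHalf m a (fun j => x (τ (bpos m 2 i j)))
        = ∑ w : Fin m → Fin m, (∏ i, a (w i)) * ((Perm.sign τ : ℤ) •
            ∏ i, ∏ j, x (τ (bpos m 2 i j)) ^ (expo m w i j : ℕ)) := by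
    intro τ
    simp only [lowerHalf]
    rw [Finset.prod_univ_sum, Fintype.piFinset_univ, Finset.smul_sum]
    refine Finset.sum_congr rfl fun w _ => ?_
    rw [Finset.prod_mul_distrib, mul_smul_comm]
    simp [expo]
  simp only [hexp]
  rw [Finset.sum_comm]
  simp only [← Finset.mul_sum, alternating_sum, mul_ite, mul_zero]
  rw [← Finset.sum_filter]
  have hconst : ∀ w ∈ Finset.univ.filter (fun w : Fin m → Fin m => Function.Bijective w),
      (∏ i, a (w i)) * (Matrix.vandermonde x).det
        = (∏ i : Fin m, a i) * (Matrix.vandermonde x).det := by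
    intro w hw
    rw [(Finset.mem_filter.1 hw).2.prod_comp fun i : Fin m => a i]
  rw [Finset.sum_congr rfl hconst, Finset.sum_const, nsmul_eq_mul]
  congr 2
  rw [← Fintype.card_subtype, Fintype.card_congr (Equiv.bijectiveEquiv (α := Fin m) (β := Fin m))]
  simp [Fintype.card_perm]

/-- Cancelling `m!` is legitimate over the universal ring `ℤ[x, a]`, and the identity then
specializes to every commutative ring. -/
theorem pf_eq (m : ℕ) {S : Type*} [CommRing S] (x : Fin (m * 2) → S) (a : ℕ → S) :
    ∑ π ∈ Finset.univ.filter (IsPartRep m 2),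
        (Perm.sign π : ℤ) • ∏ i, ∑ e : Perm (Fin 2),
          (Perm.sign e : ℤ) • lowerHalf m a (fun j => x (π (bpos m 2 i (e j))))
      = (∏ i : Fin m, a i) * (Matrix.vandermonde x).det := by
  have huniv := mul_left_cancel₀ (Nat.cast_ne_zero.2 m.factorial_ne_zero)
    (factorial_mul_main m (S := MvPolynomial (Fin (m * 2) ⊕ ℕ) ℤ)
      (fun p => X (Sum.inl p)) fun k => X (Sum.inr k))
  have := congrArg (eval₂Hom (Int.castRingHom S) (Sum.elim x a)) huniv
  simp only [lowerHalf, Matrix.det_vandermonde, map_sum, map_prod, map_zsmul, map_mul, map_pow,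
    map_sub, eval₂Hom_X', Sum.elim_inl, Sum.elim_inr] at this
  simpa only [lowerHalf, Matrix.det_vandermonde] using this

/-- Skew-symmetry of the coefficients pairs the monomials whose exponents in the first variable
are `i` and `2 * m - 1 - i`. -/
theorem sum_eq_antisymm_lowerHalf (m : ℕ) {S : Type*} [CommRing S] (a : ℕ → S)
    (ha : ∀ i ≤ 2 * m - 1, a (2 * m - 1 - i) = - a i) (y : Fin 2 → S) :
    ∑ i ∈ Finset.range (2 * m), a i * y 0 ^ i * y 1 ^ (2 * m - 1 - i)
      = ∑ e : Perm (Fin 2), (Perm.sign e : ℤ) • lowerHalf m a fun j => y (e j) := by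
  have hperm : ∀ F : Perm (Fin 2) → S, ∑ e, F e = F 1 + F (swap 0 1) := by
    intro F
    rw [show (Finset.univ : Finset (Perm (Fin 2))) = {1, swap 0 1} by decide]
    exact Finset.sum_pair (by decide)
  rw [hperm, show Finset.range (2 * m) = Finset.range (m + m) by rw [two_mul],
    Finset.sum_range_add]
  simp only [lowerHalf, Perm.sign_one, Perm.sign_swap (zero_ne_one : (0 : Fin 2) ≠ 1), Perm.one_apply,
    swap_apply_left, swap_apply_right, Units.val_one, Units.val_neg, one_smul, neg_smul]
  rw [Fin.sum_univ_eq_sum_range (fun k => a k * (y 0 ^ k * y 1 ^ (2 * m - 1 - k))),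
    Fin.sum_univ_eq_sum_range (fun k => a k * (y 1 ^ k * y 0 ^ (2 * m - 1 - k))),
    ← Finset.sum_neg_distrib]
  congr 1
  · exact Finset.sum_congr rfl fun k _ => by ring
  · rw [← Finset.sum_range_reflect]
    refine Finset.sum_congr rfl fun k hk => ?_
    have hk' := Finset.mem_range.1 hk
    rw [show m + (m - 1 - k) = 2 * m - 1 - k by omega, ha k (by omega),
      show 2 * m - 1 - (2 * m - 1 - k) = k by omega]
    ring

theorem vand_eq (n : ℕ) (R : Type*) [CommRing R] :
    vand n R = (Matrix.vandermonde (X : Fin n → MvPolynomial (Fin n) R)).det := by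
  rw [Matrix.det_vandermonde, vand, Finset.prod_sigma']
  refine Finset.prod_bij' (fun p _ => ⟨p.1, p.2⟩) (fun p _ => (p.1, p.2)) ?_ ?_ ?_ ?_ ?_ <;> simp

theorem stmt12 (m : ℕ) (R : Type*) [CommRing R] (a : ℕ → R)
    (ha : ∀ i ≤ 2 * m - 1, a (2 * m - 1 - i) = - a i) :
    hyperPfPoly m 2
        (∑ i ∈ Finset.range (2 * m),
          MvPolynomial.C (a i) * MvPolynomial.X (0 : Fin 2) ^ i *
            MvPolynomial.X (1 : Fin 2) ^ (2 * m - 1 - i))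
      = MvPolynomial.C (∏ i ∈ Finset.range m, a i) * vand (m * 2) R := by
  have hC : ∀ i ≤ 2 * m - 1, (C (a (2 * m - 1 - i)) : MvPolynomial (Fin (m * 2)) R) = - C (a i) := by
    intro i hi
    rw [ha i hi, map_neg]
  rw [vand_eq, map_prod, ← Fin.prod_univ_eq_prod_range (fun i => C (a i)), ← pf_eq m X fun i => C (a i),
    hyperPfPoly]
  refine Finset.sum_congr rfl fun π _ => ?_
  congr 1
  refine Finset.prod_congr rfl fun i _ => ?_
  rw [← sum_eq_antisymm_lowerHalf m (fun i => C (a i)) hC fun j => X (π (bpos m 2 i j))]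
  simp [map_sum]
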